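/- arXiv:2501.15784 — 2 statements merged into one kernel-verified Lean document; each statement's English description precedes it below -/
import Mathlib

section
/- For every irrational real number θ = [a₀; a₁, a₂, …], the odd Lagrange number satisfies L₁(θ) = limsup_{i→∞} ( α_{2i+2} + [0; a_{2i+1}, a_{2i}, …, a₁] ), where the equality holds in [0, ∞] (both sides may be +∞). -/
/-!
Put `xₙ = α_{n+2} + [0; a_{n+1}, …, a₁]`. The reversed continued fraction equals `qₙ/q_{n+1}`
(`cfRev_succ_eq`), and the identity `θ (α_{n+2} q_{n+1} + qₙ) = α_{n+2} p_{n+1} + pₙ`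
(`theta_mul_eq`) together with the determinant formula `|p_{n+1} qₙ - pₙ q_{n+1}| = 1`
(`abs_det`) gives the exact error `|θ - p_{n+1}/q_{n+1}| = 1/(xₙ q_{n+1}²)` (`abs_sub_conv`).
Hence a positive `L` belongs to `S₁(θ)` exactly when `L < x_{2i}` for infinitely many `i`,
and the supremum of such `L` is the limsup of `x_{2i}`; restricting to `L > 0` loses nothing
because every `xₙ` exceeds `1`.
-/

open Filter Set MeasureTheory

/-- Complete quotients of `θ`: `α₀ = θ`, `α_{n+1} = 1/(αₙ - ⌊αₙ⌋)`. -/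
noncomputable def cfAlpha (θ : ℝ) : ℕ → ℝ
  | 0 => θ
  | n + 1 => (Int.fract (cfAlpha θ n))⁻¹

/-- Partial quotients `aₙ = ⌊αₙ⌋` of the continued fraction expansion of `θ`. -/
noncomputable def cfA (θ : ℝ) (n : ℕ) : ℤ := ⌊cfAlpha θ n⌋

/-- Numerators `pₙ` of the convergents of `θ`. -/
noncomputable def cfP (θ : ℝ) : ℕ → ℤ
  | 0 => cfA θ 0
  | 1 => cfA θ 1 * cfA θ 0 + 1
  | n + 2 => cfA θ (n + 2) * cfP θ (n + 1) + cfP θ n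

/-- Denominators `qₙ` of the convergents of `θ`. -/
noncomputable def cfQ (θ : ℝ) : ℕ → ℤ
  | 0 => 1
  | 1 => cfA θ 1
  | n + 2 => cfA θ (n + 2) * cfQ θ (n + 1) + cfQ θ n

/-- The `n`-th convergent `pₙ/qₙ` of `θ`. -/
noncomputable def cfConv (θ : ℝ) (n : ℕ) : ℝ := (cfP θ n : ℝ) / (cfQ θ n : ℝ)

/-- `S₀(θ)`: the set of `L > 0` such that `|θ - p_{2i}/q_{2i}| < 1/(L q_{2i}²)`
for infinitely many `i`. -/
def S0 (θ : ℝ) : Set ℝ :=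
  {L : ℝ | 0 < L ∧
    {i : ℕ | |θ - cfConv θ (2 * i)| < 1 / (L * ((cfQ θ (2 * i) : ℝ)) ^ 2)}.Infinite}

/-- `S₁(θ)`: the set of `L > 0` such that `|θ - p_{2i+1}/q_{2i+1}| < 1/(L q_{2i+1}²)`
for infinitely many `i`. -/
def S1 (θ : ℝ) : Set ℝ :=
  {L : ℝ | 0 < L ∧
    {i : ℕ | |θ - cfConv θ (2 * i + 1)| < 1 / (L * ((cfQ θ (2 * i + 1) : ℝ)) ^ 2)}.Infinite}

/-- The even Lagrange number `L₀(θ) = sup S₀(θ)`, as an extended real. -/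
noncomputable def L0 (θ : ℝ) : EReal := sSup ((fun L : ℝ => (L : EReal)) '' S0 θ)

/-- The odd Lagrange number `L₁(θ) = sup S₁(θ)`, as an extended real. -/
noncomputable def L1 (θ : ℝ) : EReal := sSup ((fun L : ℝ => (L : EReal)) '' S1 θ)

/-- `L₀(θ)` is attainable if the supremum defining it is a maximum. -/
def L0Attainable (θ : ℝ) : Prop := ∃ L ∈ S0 θ, (L : EReal) = L0 θ

/-- `L₁(θ)` is attainable if the supremum defining it is a maximum. -/
def L1Attainable (θ : ℝ) : Prop := ∃ L ∈ S1 θ, (L : EReal) = L1 θ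

/-- The value of the reversed finite continued fraction `[0; aₙ, a_{n-1}, …, a₁]`. -/
noncomputable def cfRev (θ : ℝ) : ℕ → ℝ
  | 0 => 0
  | n + 1 => ((cfA θ (n + 1) : ℝ) + cfRev θ n)⁻¹

theorem cfAlpha_irrational {θ : ℝ} (hθ : Irrational θ) (n : ℕ) : Irrational (cfAlpha θ n) := by
  induction n with
  | zero => exact hθ
  | succ n ih =>
    have h : Irrational (Int.fract (cfAlpha θ n)) := ih.sub_intCast _
    exact h.inv

theorem fract_cfAlpha_pos {θ : ℝ} (hθ : Irrational θ) (n : ℕ) : 0 < Int.fract (cfAlpha θ n) := by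
  have h : Irrational (Int.fract (cfAlpha θ n)) := (cfAlpha_irrational hθ n).sub_intCast _
  exact lt_of_le_of_ne (Int.fract_nonneg _) h.ne_zero.symm

theorem one_lt_cfAlpha_succ {θ : ℝ} (hθ : Irrational θ) (n : ℕ) : 1 < cfAlpha θ (n + 1) :=
  (one_lt_inv₀ (fract_cfAlpha_pos hθ n)).2 (Int.fract_lt_one _)

theorem one_le_cfA_succ {θ : ℝ} (hθ : Irrational θ) (n : ℕ) : 1 ≤ cfA θ (n + 1) := by
  refine Int.le_floor.2 ?_
  exact_mod_cast (one_lt_cfAlpha_succ hθ n).le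

theorem cfAlpha_rec {θ : ℝ} (hθ : Irrational θ) (n : ℕ) :
    (cfAlpha θ n - cfA θ n) * cfAlpha θ (n + 1) = 1 :=
  mul_inv_cancel₀ (fract_cfAlpha_pos hθ n).ne'

theorem cfQ_pos {θ : ℝ} (hθ : Irrational θ) (n : ℕ) : 0 < cfQ θ n ∧ 0 < cfQ θ (n + 1) := by
  induction n with
  | zero => exact ⟨one_pos, one_le_cfA_succ hθ 0⟩
  | succ n ih =>
    refine ⟨ih.2, ?_⟩
    have ha : 0 < cfA θ (n + 2) := one_le_cfA_succ hθ (n + 1)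
    exact add_pos (mul_pos ha ih.2) ih.1

theorem cfRev_succ_eq {θ : ℝ} (hθ : Irrational θ) (n : ℕ) :
    cfRev θ (n + 1) = (cfQ θ n : ℝ) / cfQ θ (n + 1) := by
  induction n with
  | zero => simp [cfRev, cfQ]
  | succ n ih =>
    have h : (0 : ℝ) < cfQ θ (n + 1) := by exact_mod_cast (cfQ_pos hθ n).2
    have hq : (cfQ θ (n + 2) : ℝ) = cfA θ (n + 2) * cfQ θ (n + 1) + cfQ θ n := by
      exact_mod_cast (rfl : cfQ θ (n + 2) = _)
    rw [cfRev, ih, show n + 1 + 1 = n + 2 from rfl, hq, ← inv_div]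
    field_simp

theorem abs_det (θ : ℝ) (n : ℕ) :
    |(cfP θ (n + 1) : ℝ) * cfQ θ n - cfP θ n * cfQ θ (n + 1)| = 1 := by
  induction n with
  | zero =>
    simp only [cfP, cfQ]
    push_cast
    ring_nf
    simp
  | succ n ih =>
    rw [← ih, ← abs_neg, cfP, cfQ]
    push_cast
    ring_nf

theorem theta_mul_eq {θ : ℝ} (hθ : Irrational θ) (n : ℕ) :
    θ * (cfAlpha θ (n + 2) * cfQ θ (n + 1) + cfQ θ n)
      = cfAlpha θ (n + 2) * cfP θ (n + 1) + cfP θ n := by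
  induction n with
  | zero =>
    have h0 := cfAlpha_rec hθ 0
    have h1 := cfAlpha_rec hθ 1
    have h2 : cfAlpha θ 0 = θ := rfl
    rw [h2] at h0
    simp only [cfP, cfQ, zero_add] at *
    push_cast
    linear_combination (cfAlpha θ 2) * h0 + (cfA θ 0 - θ) * h1
  | succ n ih =>
    have h := cfAlpha_rec hθ (n + 2)
    rw [cfP, cfQ]
    push_cast
    -- `α_{n+3}` times the inductive identity, simplified by `α_{n+2} α_{n+3} = a_{n+2} α_{n+3} + 1`
    linear_combination (cfAlpha θ (n + 3)) * ih
      + (cfP θ (n + 1) - θ * cfQ θ (n + 1)) * h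

/-- The exact approximation error of a convergent. -/
theorem abs_sub_conv {θ : ℝ} (hθ : Irrational θ) (n : ℕ) :
    |θ - cfConv θ (n + 1)|
      = 1 / ((cfAlpha θ (n + 2) + cfRev θ (n + 1)) * (cfQ θ (n + 1) : ℝ) ^ 2) := by
  have hq0 : (0 : ℝ) < cfQ θ n := by exact_mod_cast (cfQ_pos hθ n).1
  have hq : (0 : ℝ) < cfQ θ (n + 1) := by exact_mod_cast (cfQ_pos hθ n).2
  have hα : 0 < cfAlpha θ (n + 2) := one_pos.trans (one_lt_cfAlpha_succ hθ (n + 1))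
  have hD : 0 < (cfAlpha θ (n + 2) * cfQ θ (n + 1) + cfQ θ n) * (cfQ θ (n + 1) : ℝ) := by
    positivity
  have key : (θ - cfConv θ (n + 1)) *
      ((cfAlpha θ (n + 2) * cfQ θ (n + 1) + cfQ θ n) * (cfQ θ (n + 1) : ℝ))
      = -((cfP θ (n + 1) : ℝ) * cfQ θ n - cfP θ n * cfQ θ (n + 1)) := by
    have hc : cfConv θ (n + 1) * cfQ θ (n + 1) = cfP θ (n + 1) := div_mul_cancel₀ _ hq.ne'
    linear_combination (cfQ θ (n + 1) : ℝ) * theta_mul_eq hθ n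
      - (cfAlpha θ (n + 2) * cfQ θ (n + 1) + cfQ θ n) * hc
  have habs := congrArg abs key
  rw [abs_neg, abs_det, abs_mul, abs_of_pos hD] at habs
  rw [eq_div_of_mul_eq hD.ne' habs, cfRev_succ_eq hθ]
  congr 1
  field_simp

theorem one_lt_alpha_add_rev {θ : ℝ} (hθ : Irrational θ) (n : ℕ) :
    1 < cfAlpha θ (n + 2) + cfRev θ (n + 1) := by
  have hq0 : (0 : ℝ) < cfQ θ n := by exact_mod_cast (cfQ_pos hθ n).1
  have hq : (0 : ℝ) < cfQ θ (n + 1) := by exact_mod_cast (cfQ_pos hθ n).2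
  rw [cfRev_succ_eq hθ]
  have := one_lt_cfAlpha_succ hθ (n + 1)
  have := div_pos hq0 hq
  linarith

theorem mem_S1_iff {θ : ℝ} (hθ : Irrational θ) {L : ℝ} :
    L ∈ S1 θ ↔ 0 < L ∧ ∃ᶠ i : ℕ in atTop, L < cfAlpha θ (2 * i + 2) + cfRev θ (2 * i + 1) := by
  refine and_congr_right fun hL => ?_
  rw [← Nat.frequently_atTop_iff_infinite]
  refine frequently_congr (Eventually.of_forall fun i => ?_)
  have hq : (0 : ℝ) < cfQ θ (2 * i + 1) := by exact_mod_cast (cfQ_pos hθ (2 * i)).2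
  have hx := one_pos.trans (one_lt_alpha_add_rev hθ (2 * i))
  rw [abs_sub_conv hθ, one_div_lt_one_div (by positivity) (by positivity),
    mul_lt_mul_iff_left₀ (by positivity)]

/-- `L₁(θ) = limsup_{i→∞} (α_{2i+2} + [0; a_{2i+1}, …, a₁])`, with equality in `[0,∞]`. -/
theorem odd_lagrange_limsup (θ : ℝ) (hθ : Irrational θ) :
    L1 θ =
      Filter.limsup
        (fun i : ℕ => ((cfAlpha θ (2 * i + 2) + cfRev θ (2 * i + 1) : ℝ) : EReal))
        Filter.atTop := by
  refine le_antisymm (sSup_le ?_) (le_of_forall_lt_imp_le_of_dense fun c hc => ?_)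
  · rintro _ ⟨L, hL, rfl⟩
    refine le_limsup_of_frequently_le (((mem_S1_iff hθ).1 hL).2.mono fun i hi => ?_)
    exact EReal.coe_le_coe_iff.2 hi.le
  · have h1 : (1 : EReal) ≤ limsup
        (fun i : ℕ => ((cfAlpha θ (2 * i + 2) + cfRev θ (2 * i + 1) : ℝ) : EReal)) atTop := by
      refine le_limsup_of_frequently_le (Frequently.of_forall fun i => ?_)
      exact_mod_cast (one_lt_alpha_add_rev hθ (2 * i)).le
    -- a real threshold above both `c` and `0`, so that it is an element of `S₁(θ)`
    obtain ⟨L, hL, hL'⟩ :=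
      EReal.lt_iff_exists_real_btwn.1 (max_lt hc (zero_lt_one.trans_le h1))
    have hL0 : 0 < L := by exact_mod_cast (le_max_right _ _).trans_lt hL
    refine ((le_max_left _ _).trans_lt hL).le.trans (le_sSup ⟨L, (mem_S1_iff hθ).2 ⟨hL0, ?_⟩, rfl⟩)
    refine (frequently_lt_of_lt_limsup (by isBoundedDefault) hL').mono fun i hi => ?_
    exact_mod_cast hi
end

section
/- Let θ be an irrational real number whose continued fraction partial quotients satisfy a_{2k} = k + 1 and a_{2k+1} = 1 for all k ∈ ℕ (i.e. θ = [1; 1, 2, 1, 3, 1, 4, 1, …]). Then L₀(θ) = 1 and L₁(θ) = +∞. -/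
/-!
The classical identity `|θ - pₙ/qₙ| = 1 / (qₙ² (αₙ₊₁ + qₙ₋₁/qₙ))` turns membership in `S₀` and `S₁`
into the condition `L < αₙ₊₁ + qₙ₋₁/qₙ` for infinitely many `n` of the given parity. For odd
`n = 2i + 1` the right-hand side exceeds `a_{2i+2} = i + 2`, so every `L > 0` belongs to `S₁`. For
even `n = 2i` it is larger than `a_{2i+1} = 1`, while `1/α_{2i+2}` and `q_{2i-1}/q_{2i}` are at most
`1/a_{2i+2}` and `1/a_{2i}`, so it tends to `1`; hence `1` is the maximum of `S₀`. The identity is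
`abs_sub_cfConv`, and the criterion derived from it is `lt_approxConst_iff`.
-/

open Filter Set MeasureTheory

/-- The number `αₙ₊₂ + qₙ/qₙ₊₁`, which measures how well the convergent of index `n + 1` (not `n`)
approximates `θ`; the shift keeps the index `n` of the earlier denominator a natural number. -/
noncomputable def approxConst (θ : ℝ) (n : ℕ) : ℝ :=
  cfAlpha θ (n + 2) + (cfQ θ n : ℝ) / (cfQ θ (n + 1) : ℝ)

theorem cfA_le_cfAlpha (θ : ℝ) (n : ℕ) : (cfA θ n : ℝ) ≤ cfAlpha θ n :=
  Int.floor_le _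

theorem cfAlpha_pos {θ : ℝ} (h : ∀ n, 1 ≤ cfA θ n) (n : ℕ) : 0 < cfAlpha θ n := by
  have h1 : (1 : ℝ) ≤ cfA θ n := by exact_mod_cast h n
  linarith [cfA_le_cfAlpha θ n]

/-- The recurrence `αₙ = aₙ + 1/αₙ₊₁`; it also holds when `αₙ` is an integer, since then `αₙ₊₁ = 0`
and `0⁻¹ = 0`. -/
theorem cfAlpha_eq {θ : ℝ} (n : ℕ) : cfAlpha θ n = cfA θ n + (cfAlpha θ (n + 1))⁻¹ := by
  simp only [cfAlpha, inv_inv, cfA]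
  exact (Int.floor_add_fract _).symm

theorem cfQ_pos_s9 {θ : ℝ} (h : ∀ n, 1 ≤ cfA θ n) (n : ℕ) : 0 < cfQ θ n := by
  induction n using Nat.strong_induction_on with
  | _ n ih =>
    match n, ih with
    | 0, _ => simp [cfQ]
    | 1, _ => simpa [cfQ] using lt_of_lt_of_le one_pos (h 1)
    | n + 2, ih =>
      have h1 := ih (n + 1) (by omega)
      have h2 := ih n (by omega)
      have h3 := h (n + 2)
      simp only [cfQ]
      positivity

theorem cf_det (θ : ℝ) (n : ℕ) :
    (cfP θ (n + 1) : ℝ) * cfQ θ n - cfP θ n * cfQ θ (n + 1) = (-1) ^ n := by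
  induction n with
  | zero => simp [cfP, cfQ]; ring
  | succ n ih =>
    simp only [cfP, cfQ]
    push_cast
    rw [pow_succ, ← ih]
    ring

/-- `θ = (αₙ₊₂ pₙ₊₁ + pₙ) / (αₙ₊₂ qₙ₊₁ + qₙ)`, with denominators cleared. -/
theorem theta_mul {θ : ℝ} (h : ∀ n, 1 ≤ cfA θ n) (n : ℕ) :
    θ * (cfAlpha θ (n + 2) * cfQ θ (n + 1) + cfQ θ n) =
      cfAlpha θ (n + 2) * cfP θ (n + 1) + cfP θ n := by
  induction n with
  | zero =>
    have e0 : θ = cfA θ 0 + (cfAlpha θ 1)⁻¹ := cfAlpha_eq (θ := θ) 0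
    have e1 := cfAlpha_eq (θ := θ) 1
    have p1 := cfAlpha_pos h 1
    have p2 := cfAlpha_pos h 2
    simp only [cfP, cfQ, zero_add]
    push_cast
    have e2 : cfAlpha θ 2 * cfA θ 1 + 1 = cfAlpha θ 2 * cfAlpha θ 1 := by
      rw [e1]; field_simp
    have e3 : θ * cfAlpha θ 1 = cfA θ 0 * cfAlpha θ 1 + 1 := by
      nth_rw 1 [e0]; field_simp
    linear_combination (θ - cfA θ 0) * e2 + cfAlpha θ 2 * e3
  | succ n ih =>
    have e1 := cfAlpha_eq (θ := θ) (n + 2)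
    have p2 := cfAlpha_pos h (n + 3)
    have e2 : cfAlpha θ (n + 3) * cfA θ (n + 2) + 1 = cfAlpha θ (n + 3) * cfAlpha θ (n + 2) := by
      rw [e1]; field_simp
    simp only [cfP, cfQ]
    push_cast
    linear_combination (θ * cfQ θ (n + 1) - cfP θ (n + 1)) * e2 + cfAlpha θ (n + 3) * ih

theorem approxConst_pos {θ : ℝ} (h : ∀ n, 1 ≤ cfA θ n) (n : ℕ) : 0 < approxConst θ n := by
  have h1 : (0 : ℝ) < cfQ θ n := by exact_mod_cast cfQ_pos_s9 h n
  have h2 : (0 : ℝ) < cfQ θ (n + 1) := by exact_mod_cast cfQ_pos_s9 h (n + 1)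
  have h3 := cfAlpha_pos h (n + 2)
  unfold approxConst
  positivity

theorem abs_sub_cfConv {θ : ℝ} (h : ∀ n, 1 ≤ cfA θ n) (n : ℕ) :
    |θ - cfConv θ (n + 1)| = 1 / (approxConst θ n * (cfQ θ (n + 1) : ℝ) ^ 2) := by
  have h1 : (0 : ℝ) < cfQ θ n := by exact_mod_cast cfQ_pos_s9 h n
  have h2 : (0 : ℝ) < cfQ θ (n + 1) := by exact_mod_cast cfQ_pos_s9 h (n + 1)
  have h3 := cfAlpha_pos h (n + 2)
  have hA := approxConst_pos h n
  have hd := cf_det θ n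
  have ht := theta_mul h n
  have key : θ - cfConv θ (n + 1) =
      -(-1) ^ n / (approxConst θ n * (cfQ θ (n + 1) : ℝ) ^ 2) := by
    rw [eq_div_iff (by positivity), ← hd, cfConv, approxConst]
    field_simp
    linear_combination (cfQ θ (n + 1) : ℝ) * ht
  rw [key, abs_div, abs_neg, abs_pow, abs_neg, abs_one, one_pow, abs_of_pos (by positivity)]

/-- Membership of `i` in the sets defining `S0` and `S1` is a lower bound on `approxConst`. -/
theorem lt_approxConst_iff {θ : ℝ} (h : ∀ n, 1 ≤ cfA θ n) (n : ℕ) {L : ℝ} (hL : 0 < L) :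
    |θ - cfConv θ (n + 1)| < 1 / (L * (cfQ θ (n + 1) : ℝ) ^ 2) ↔ L < approxConst θ n := by
  have h2 : (0 : ℝ) < cfQ θ (n + 1) := by exact_mod_cast cfQ_pos_s9 h (n + 1)
  have hA := approxConst_pos h n
  rw [abs_sub_cfConv h, one_div_lt_one_div (by positivity) (by positivity)]
  exact mul_lt_mul_iff_left₀ (by positivity)

theorem cfA_lt_approxConst {θ : ℝ} (h : ∀ n, 1 ≤ cfA θ n) (n : ℕ) :
    (cfA θ (n + 2) : ℝ) < approxConst θ n := by
  have h1 : (0 : ℝ) < cfQ θ n := by exact_mod_cast cfQ_pos_s9 h n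
  have h2 : (0 : ℝ) < cfQ θ (n + 1) := by exact_mod_cast cfQ_pos_s9 h (n + 1)
  have h3 := cfA_le_cfAlpha θ (n + 2)
  have h4 := div_pos h1 h2
  unfold approxConst
  linarith

/-- Bounds both fractional contributions to `approxConst` by the reciprocals of the partial
quotients on either side of `aₙ₊₃`. -/
theorem approxConst_le {θ : ℝ} (h : ∀ n, 1 ≤ cfA θ n) (n : ℕ) :
    approxConst θ (n + 1) ≤
      cfA θ (n + 3) + (cfA θ (n + 4) : ℝ)⁻¹ + (cfA θ (n + 2) : ℝ)⁻¹ := by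
  have q0 : (0 : ℝ) < cfQ θ n := by exact_mod_cast cfQ_pos_s9 h n
  have q1 : (0 : ℝ) < cfQ θ (n + 1) := by exact_mod_cast cfQ_pos_s9 h (n + 1)
  have q2 : (0 : ℝ) < cfQ θ (n + 2) := by exact_mod_cast cfQ_pos_s9 h (n + 2)
  have a2 : (0 : ℝ) < cfA θ (n + 2) := by exact_mod_cast one_pos.trans_le (h (n + 2))
  have a4 : (0 : ℝ) < cfA θ (n + 4) := by exact_mod_cast one_pos.trans_le (h (n + 4))
  have hα : (cfAlpha θ (n + 4))⁻¹ ≤ (cfA θ (n + 4) : ℝ)⁻¹ :=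
    inv_anti₀ a4 (cfA_le_cfAlpha θ (n + 4))
  have hq : (cfQ θ (n + 1) : ℝ) / cfQ θ (n + 2) ≤ (cfA θ (n + 2) : ℝ)⁻¹ := by
    have e : (cfQ θ (n + 2) : ℝ) = cfA θ (n + 2) * cfQ θ (n + 1) + cfQ θ n := by
      simp [cfQ]
    rw [div_le_iff₀ q2, inv_mul_eq_div, le_div_iff₀ a2, e]
    linarith
  have e3 := cfAlpha_eq (θ := θ) (n + 3)
  unfold approxConst
  linarith

/-- For `θ = [1; 1, 2, 1, 3, 1, 4, 1, …]`, i.e. `a_{2k} = k + 1` and `a_{2k+1} = 1` for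
all `k`, one has `L₀(θ) = 1` and `L₁(θ) = +∞`. -/
theorem lagrange_of_special_theta (θ : ℝ) (hθ : Irrational θ)
    (ha : ∀ k : ℕ, cfA θ (2 * k) = (k : ℤ) + 1 ∧ cfA θ (2 * k + 1) = 1) :
    L0 θ = (1 : EReal) ∧ L1 θ = ⊤ := by
  have h : ∀ n, 1 ≤ cfA θ n := by
    intro n
    obtain ⟨k, rfl | rfl⟩ := Nat.even_or_odd' n
    · rw [(ha k).1]; omega
    · rw [(ha k).2]
  have aE : ∀ k : ℕ, (cfA θ (2 * k) : ℝ) = k + 1 := by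
    intro k; rw [(ha k).1]; push_cast; ring
  have aO : ∀ k : ℕ, (cfA θ (2 * k + 1) : ℝ) = 1 := by
    intro k; rw [(ha k).2]; norm_num
  refine ⟨le_antisymm (sSup_le ?_) (le_sSup ⟨1, ⟨one_pos, ?_⟩, rfl⟩), ?_⟩
  · rintro _ ⟨L, ⟨hL, hinf⟩, rfl⟩
    by_contra! hlt
    have hL1 : 1 < L := by exact_mod_cast hlt
    -- For `i = j + 1` the constant is at most `1 + 2 / (j + 2)`, below `L` once `j + 2 > 2 / (L - 1)`.
    obtain ⟨N, hN⟩ := exists_nat_gt (2 / (L - 1))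
    obtain ⟨i, hi, hNi⟩ := hinf.exists_gt N
    obtain ⟨j, rfl⟩ : ∃ j, i = j + 1 := ⟨i - 1, by omega⟩
    have h1 := (lt_approxConst_iff h (2 * j + 1) hL).1 hi
    have h2 := approxConst_le h (2 * j)
    have e2 : (cfA θ (2 * j + 2) : ℝ) = j + 2 := by
      rw [show 2 * j + 2 = 2 * (j + 1) by ring, aE]; push_cast; ring
    have e3 : (cfA θ (2 * j + 3) : ℝ) = 1 := aO (j + 1)
    have e4 : (cfA θ (2 * j + 4) : ℝ) = j + 3 := by
      rw [show 2 * j + 4 = 2 * (j + 2) by ring, aE]; push_cast; ring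
    rw [e2, e3, e4] at h2
    have h3 : ((j : ℝ) + 3)⁻¹ ≤ ((j : ℝ) + 2)⁻¹ := inv_anti₀ (by positivity) (by linarith)
    have hNj : (N : ℝ) < j + 1 := by exact_mod_cast hNi
    have h4 : 2 / (L - 1) < (j : ℝ) + 2 := by linarith
    have h5 : L - 1 < 2 * ((j : ℝ) + 2)⁻¹ := by linarith
    rw [div_lt_iff₀ (by linarith)] at h4
    rw [← div_eq_mul_inv, lt_div_iff₀ (by positivity)] at h5
    linarith
  · refine Set.infinite_of_forall_exists_gt fun N => ⟨N + 1, ?_, Nat.lt_succ_self N⟩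
    refine (lt_approxConst_iff h (2 * N + 1) one_pos).2 ?_
    have h1 := cfA_lt_approxConst h (2 * N + 1)
    rwa [show (cfA θ (2 * N + 1 + 2) : ℝ) = 1 from aO (N + 1)] at h1
  · rw [L1, EReal.eq_top_iff_forall_lt]
    intro y
    have hpos : (0 : ℝ) < |y| + 1 := by positivity
    have hmem : |y| + 1 ∈ S1 θ := by
      refine ⟨hpos, Set.infinite_of_forall_exists_gt fun N => ?_⟩
      refine ⟨N + ⌈|y|⌉₊ + 1, (lt_approxConst_iff h _ hpos).2 ?_, by omega⟩
      refine lt_trans ?_ (cfA_lt_approxConst h _)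
      rw [show 2 * (N + ⌈|y|⌉₊ + 1) + 2 = 2 * (N + ⌈|y|⌉₊ + 2) by ring, aE]
      push_cast
      linarith [Nat.le_ceil |y|, Nat.cast_nonneg (α := ℝ) N]
    refine lt_of_lt_of_le ?_ (le_sSup ⟨_, hmem, rfl⟩)
    exact EReal.coe_lt_coe_iff.2 ((le_abs_self y).trans_lt (lt_add_one _))
end
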